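/- Let m ≥ 2 be an integer. There are infinitely many positive non-saturated lattices L of rank m (inside ℤ^N for various N) such that one of the lattice ideals I_L, I_{L^sat} is a complete intersection while the quotient of the polynomial ring by the other is not Cohen–Macaulay. In particular, for each m ≥ 2: (a) there are infinitely many such L with I_L a complete intersection and k[x]/I_{L^sat} not Cohen–Macaulay, and (b) there are infinitely many such L with k[x]/I_L not Cohen–Macaulay and I_{L^sat} a complete intersection. -/

import Mathlib

/-!
Write `R = k[x]`. In both families one of `L`, `L^sat` has a triangular basis: vectors
`N_i e_i - w_i` for `m` pivot indices `i`, with `w_i` supported off the pivots. The binomials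
`x_i^{N_i} - x^{w_i}` of such a basis generate the lattice ideal
(`isCI_triLattice`), which is therefore a complete intersection.

Failure of the Cohen–Macaulay property is detected by Tor (`not_isCM`). Suppose `I_L` has
codimension `m`, two variables `a, d` are fixed, and `I_L` contains binomials `h_1, …, h_m` that
are powers of `m` further variables modulo `(a, d)`. If `R/I_L` has a free resolution of length
at most `m`, then `Tor_{m+1}(R/I_L, R/(a, d, h_1, …, h_m)) = 0`. Since `h_i` annihilates `R/I_L`,
multiplication by `h_i` is null-homotopic on the resolution, so the vanishing descends one `h_i`
and one homological degree at a time (`torVanishes_descend`) to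
`Tor_1(R/I_L, R/(a, d)) = H_1(a, d; R/I_L) = 0`. Hence a relation `a x^γ = d x^β` in `R/I_L`
forces `x^β ∈ (a) + I_L` (`mem_of_torVanishes_zero`). This membership fails when no monomial in
the fiber of `β` is divisible by `a`, as summing coefficients over the fiber shows
(`monomial_notMem_sup`).

* Family (a): `I_L = (b⁴ - a³d, c⁴ - ad³, z_i - a)`. The saturation is the lattice of the rational
  quartic curve (with `z_i = a`), and the violating relation is `a c² = d b²`.
* Family (b): the vectors with `u_b + u_c` even in the lattice of `(b - a, c - d, z_i - a)`, which
  is the saturation. The violating relation is `a c = d b`.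

Adding `t` variables that occur in no lattice vector gives infinitely many examples.
-/

open MvPolynomial

section LatticeDefs

variable {V κ : Type*}

/-- The exponent vector of the positive part `u₊` of an integer vector `u`. -/
noncomputable def posExp [Fintype V] (u : V → ℤ) : V →₀ ℕ :=
  Finsupp.equivFunOnFinite.symm fun i => (u i).toNat

/-- The exponent vector of the negative part `u₋` of an integer vector `u`. -/
noncomputable def negExp [Fintype V] (u : V → ℤ) : V →₀ ℕ :=
  Finsupp.equivFunOnFinite.symm fun i => (-u i).toNat

/-- The binomial `x^{u₊} - x^{u₋}` associated to an integer vector `u`. -/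
noncomputable def latticeBinomial (k : Type*) [CommRing k] [Fintype V] (u : V → ℤ) :
    MvPolynomial V k :=
  monomial (posExp u) (1 : k) - monomial (negExp u) (1 : k)

/-- The lattice ideal `I_L = ⟨x^{u₊} - x^{u₋} : u ∈ L⟩` of a lattice `L ⊆ ℤ^V`. -/
noncomputable def latticeIdeal (k : Type*) [CommRing k] [Fintype V]
    (L : Submodule ℤ (V → ℤ)) : Ideal (MvPolynomial V k) :=
  Ideal.span {p | ∃ u ∈ L, p = latticeBinomial k u}

/-- A lattice `L ⊆ ℤ^V` is positive if `L ∩ ℕ^V = {0}`. -/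
def IsPositiveLattice (L : Submodule ℤ (V → ℤ)) : Prop :=
  ∀ u ∈ L, (∀ i, 0 ≤ u i) → u = 0

/-- The rank of a lattice. -/
noncomputable def latticeRank (L : Submodule ℤ (V → ℤ)) : ℕ :=
  Module.finrank ℤ L

/-- The lattice `ℤB` spanned by the columns of an integer matrix `B`. -/
def colSpan [Fintype κ] (B : Matrix V κ ℤ) : Submodule ℤ (V → ℤ) :=
  LinearMap.range B.mulVecLin

/-- The ideal `I` can be generated by `m` elements (`I` is a complete intersection when
`m` is the codimension of `I`). -/
def IsCI {R : Type*} [CommRing R] (I : Ideal R) (m : ℕ) : Prop :=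
  ∃ f : Fin m → R, Ideal.span (Set.range f) = I

/-- A matrix is mixed if every column contains a strictly positive and a strictly
negative entry. -/
def Mixed (B : Matrix V κ ℤ) : Prop :=
  ∀ j, (∃ i, 0 < B i j) ∧ (∃ i, B i j < 0)

/-- A matrix is dominating if it contains no square mixed submatrices. -/
def Dominating {a b : ℕ} (B : Matrix (Fin a) (Fin b) ℤ) : Prop :=
  ∀ s : ℕ, s ≠ 0 → ∀ (r : Fin s → Fin a) (c : Fin s → Fin b),
    Function.Injective r → Function.Injective c → ¬ Mixed (B.submatrix r c)

/-- The columns of `B` form a `ℤ`-basis of the lattice `L` (so that the rows of `B`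
are a Gale diagram of `L`). -/
def IsLatticeBasis {n m : ℕ} (L : Submodule ℤ (Fin n → ℤ)) (B : Matrix (Fin n) (Fin m) ℤ) :
    Prop :=
  LinearIndependent ℤ (fun j : Fin m => fun i => B i j) ∧ colSpan B = L

/-- The Gale diagram given by the rows of `B` is imbalanced: each row has `b_{i1} = 0`
or `b_{i2} ≥ 0`. -/
def Imbalanced {n : ℕ} (B : Matrix (Fin n) (Fin 2) ℤ) : Prop :=
  ∀ i, B i 0 = 0 ∨ 0 ≤ B i 1

/-- The rows of `B` meet all four open quadrants of `ℝ²`. -/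
def MeetsFourQuadrants {n : ℕ} (B : Matrix (Fin n) (Fin 2) ℤ) : Prop :=
  (∃ i, 0 < B i 0 ∧ 0 < B i 1) ∧ (∃ i, 0 < B i 0 ∧ B i 1 < 0) ∧
    (∃ i, B i 0 < 0 ∧ 0 < B i 1) ∧ (∃ i, B i 0 < 0 ∧ B i 1 < 0)

/-- The saturation `L^sat = {u : m • u ∈ L for some positive integer m}` of a lattice. -/
noncomputable def saturation (L : Submodule ℤ (V → ℤ)) : Submodule ℤ (V → ℤ) where
  carrier := {u | ∃ m : ℕ, 0 < m ∧ (m : ℤ) • u ∈ L}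
  zero_mem' := ⟨1, one_pos, by simp⟩
  add_mem' := by
    rintro a b ⟨p, hp, hpa⟩ ⟨q, hq, hqb⟩
    refine ⟨p * q, Nat.mul_pos hp hq, ?_⟩
    have ha : ((p * q : ℕ) : ℤ) • a ∈ L := by
      have h : ((p * q : ℕ) : ℤ) • a = (q : ℤ) • ((p : ℤ) • a) := by
        rw [smul_smul]; push_cast; rw [mul_comm]
      rw [h]; exact L.smul_mem _ hpa
    have hb : ((p * q : ℕ) : ℤ) • b ∈ L := by
      have h : ((p * q : ℕ) : ℤ) • b = (p : ℤ) • ((q : ℤ) • b) := by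
        rw [smul_smul]; push_cast; ring_nf
      rw [h]; exact L.smul_mem _ hqb
    rw [smul_add]
    exact L.add_mem ha hb
  smul_mem' := by
    rintro c a ⟨p, hp, hpa⟩
    exact ⟨p, hp, by rw [smul_comm]; exact L.smul_mem _ hpa⟩

/-- The data `(σ, A, p)` of a finite free resolution of `k[x]/I`:
`⋯ → k[x]^{σ(j+1)} --A j--> k[x]^{σ j} → ⋯ → k[x]^{σ 0} --v ↦ Σ v g * p g--> k[x]/I → 0`
is exact. -/
def IsFreeResolution (k : Type*) [Field k] [Fintype V]
    (I : Ideal (MvPolynomial V k)) (σ : ℕ → Type) [∀ j, Fintype (σ j)]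
    (A : ∀ j, Matrix (σ j) (σ (j + 1)) (MvPolynomial V k))
    (p : σ 0 → MvPolynomial V k) : Prop :=
  Ideal.span (Set.range p) ⊔ I = ⊤ ∧
    (∀ v : σ 0 → MvPolynomial V k,
      (∑ g, v g * p g) ∈ I ↔ v ∈ LinearMap.range (A 0).mulVecLin) ∧
    ∀ j, LinearMap.ker (A j).mulVecLin = LinearMap.range (A (j + 1)).mulVecLin

/-- `k[x]/I` admits a free resolution of length at most `m`. -/
def HasFreeResolutionOfLength (k : Type*) [Field k] [Fintype V]
    (I : Ideal (MvPolynomial V k)) (m : ℕ) : Prop :=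
  ∃ (σ : ℕ → Type) (hfin : ∀ j, Fintype (σ j))
    (A : ∀ j, Matrix (σ j) (σ (j + 1)) (MvPolynomial V k))
    (p : σ 0 → MvPolynomial V k),
    (∀ j, m < j → IsEmpty (σ j)) ∧ @IsFreeResolution V k _ _ I σ hfin A p

/-- Cohen–Macaulayness of `k[x]/I_L` for a positive lattice `L`, via the
Auslander–Buchsbaum characterization: the quotient is Cohen–Macaulay if and only if its
projective dimension over `k[x]` equals the codimension `rank L` of `I_L`, i.e. iff it
admits a free resolution of length `rank L`. -/
def IsCMLatticeQuotient (k : Type*) [Field k] [Fintype V]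
    (L : Submodule ℤ (V → ℤ)) : Prop :=
  HasFreeResolutionOfLength k (latticeIdeal k L) (latticeRank L)

/-- The degree in `Γ = ℤ^V/L` of the monomial with exponent vector `u`. -/
noncomputable def degQ [Fintype V] (L : Submodule ℤ (V → ℤ)) (u : V →₀ ℕ) :
    (V → ℤ) ⧸ L :=
  Submodule.Quotient.mk fun i => (u i : ℤ)

/-- The data `(σ, deg, A, p)` is a minimal free resolution of `k[x]/I_L`, graded by
`Γ = ℤ^V/L`: a free resolution in which all differentials (and the augmentation) are
homogeneous for the degrees `deg` of the generators and have entries with zero constant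
term.  The `Γ`-graded Betti number `β_{j,C}` of `k[x]/I_L` is then the number of
generators `g : σ j` with `deg j g = C`. -/
def IsMinimalGradedFreeResolution (k : Type*) [Field k] [Fintype V]
    (L : Submodule ℤ (V → ℤ)) (σ : ℕ → Type) [∀ j, Fintype (σ j)]
    (deg : ∀ j, σ j → ((V → ℤ) ⧸ L))
    (A : ∀ j, Matrix (σ j) (σ (j + 1)) (MvPolynomial V k))
    (p : σ 0 → MvPolynomial V k) : Prop :=
  IsFreeResolution k (latticeIdeal k L) σ A p ∧
    (∀ g, ∀ u ∈ (p g).support, degQ L u = deg 0 g) ∧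
    (∀ j g f, ∀ u ∈ (A j g f).support, degQ L u + deg j g = deg (j + 1) f) ∧
    ∀ j g f, MvPolynomial.coeff 0 (A j g f) = 0

/-- `F` is a face of the simplicial complex `Δ_C` attached to the fiber `C = c + L`:
the fiber contains a coordinatewise nonnegative vector whose support contains `F`. -/
def FaceOf (L : Submodule ℤ (V → ℤ)) (c : V → ℤ) (F : Finset V) : Prop :=
  ∃ a : V → ℤ, (∀ i, 0 ≤ a i) ∧ a - c ∈ L ∧ ∀ i ∈ F, a i ≠ 0

/-- The simplicial boundary matrix of the complex whose faces are given by `P`, from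
chains on `(d+1)`-element faces to chains on `d`-element faces. -/
noncomputable def boundaryMatrix (k : Type*) [Field k] [LinearOrder V]
    (P : Finset V → Prop) (d : ℕ) :
    Matrix {F : Finset V // P F ∧ F.card = d} {F : Finset V // P F ∧ F.card = d + 1} k :=
  fun G F =>
    if G.1 ⊆ F.1 then
      ∑ i ∈ F.1 \ G.1, (-1 : k) ^ (F.1.filter fun x => x < i).card
    else 0

/-- The rank of the `j`-th reduced simplicial homology, with coefficients in `k`, of the
simplicial complex whose faces are given by `P`:
`dim ker ∂_j - dim im ∂_{j+1}` where chains in homological degree `j` live on faces with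
`j+1` elements. -/
noncomputable def reducedHomologyRank (k : Type*) [Field k] [Fintype V] [LinearOrder V]
    (P : Finset V → Prop) (j : ℕ) : ℕ :=
  letI : Fintype {F : Finset V // P F ∧ F.card = j + 1} := Fintype.ofFinite _
  letI : Fintype {F : Finset V // P F ∧ F.card = j + 1 + 1} := Fintype.ofFinite _
  Fintype.card {F : Finset V // P F ∧ F.card = j + 1} -
    (boundaryMatrix k P j).rank - (boundaryMatrix k P (j + 1)).rank

end LatticeDefs

/-! ### Vanishing of Tor along a free resolution -/

section Homological

variable {R : Type*} [CommRing R]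

/-- `Tor_{j+1}(M, R/q) = 0`, where `M` is resolved by the free modules `R^{σ j}` with
differentials `A j`, spelled out on representatives: a vector of `R^{σ (j+1)}` whose boundary
vanishes modulo `q` is a boundary modulo `q`. -/
def TorVanishes {σ : ℕ → Type} [∀ j, Fintype (σ j)]
    (A : ∀ j, Matrix (σ j) (σ (j + 1)) R) (q : Ideal R) (j : ℕ) : Prop :=
  ∀ v : σ (j + 1) → R, (∀ g, (A j).mulVec v g ∈ q) →
    ∃ w : σ (j + 2) → R, ∀ g, (v - (A (j + 1)).mulVec w) g ∈ q

lemma mulVec_mem_ideal {α β : Type*} [Fintype β] (q : Ideal R) (B : Matrix α β R)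
    {v : β → R} (hv : ∀ b, v b ∈ q) (a : α) : B.mulVec v a ∈ q :=
  q.sum_mem fun b _ => q.mul_mem_left _ (hv b)

lemma exists_matrix_mul_eq {α β γ : Type*} [Fintype β] (A : Matrix α β R) (B : Matrix α γ R)
    (h : ∀ c, (fun a => B a c) ∈ LinearMap.range A.mulVecLin) :
    ∃ S : Matrix β γ R, A * S = B := by
  choose s hs using h
  refine ⟨fun b c => s c b, ?_⟩
  ext a c
  exact congrFun (hs c) a

variable {σ : ℕ → Type} [∀ j, Fintype (σ j)]
  {A : ∀ j, Matrix (σ j) (σ (j + 1)) R}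

/-- If multiplication by `h` vanishes on the cokernel of `A 0`, it is null-homotopic on the
resolution. Only one square of the homotopy at a time is recorded. -/
lemma exists_homotopy [∀ j, DecidableEq (σ j)]
    (hex : ∀ j, LinearMap.ker (A j).mulVecLin = LinearMap.range (A (j + 1)).mulVecLin) (h : R)
    (h0 : ∀ v : σ 0 → R, h • v ∈ LinearMap.range (A 0).mulVecLin) (j : ℕ) :
    ∃ (S : Matrix (σ (j + 2)) (σ (j + 1)) R) (T : Matrix (σ (j + 1)) (σ j) R),
      A (j + 1) * S + T * A j = h • (1 : Matrix (σ (j + 1)) (σ (j + 1)) R) := by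
  have hcomp : ∀ j, A j * A (j + 1) = 0 := by
    intro j
    apply Matrix.mulVec_injective
    funext v
    have : (A (j + 1)).mulVec v ∈ LinearMap.ker (A j).mulVecLin := by
      rw [hex]; exact ⟨v, rfl⟩
    simpa [LinearMap.mem_ker, ← Matrix.mulVec_mulVec] using this
  -- The next square exists as soon as `h - T A_j` takes values in the cycles.
  have step : ∀ j (T : Matrix (σ (j + 1)) (σ j) R),
      A j * (h • 1 - T * A j) = 0 →
      ∃ S : Matrix (σ (j + 2)) (σ (j + 1)) R, A (j + 1) * S + T * A j = h • 1 := by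
    intro j T hT
    obtain ⟨S, hS⟩ := exists_matrix_mul_eq (A (j + 1)) (h • 1 - T * A j) (by
      intro c
      rw [← hex, LinearMap.mem_ker]
      ext a
      exact congrFun (congrFun hT a) c)
    exact ⟨S, by rw [hS]; abel⟩
  induction j with
  | zero =>
    obtain ⟨T, hT⟩ := exists_matrix_mul_eq (A 0) (h • (1 : Matrix (σ 0) (σ 0) R)) (by
      intro c
      exact h0 fun a => (1 : Matrix (σ 0) (σ 0) R) a c)
    obtain ⟨S, hS⟩ := step 0 T (by
      rw [Matrix.mul_sub, ← Matrix.mul_assoc, hT]; simp)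
    exact ⟨S, T, hS⟩
  | succ j ih =>
    obtain ⟨T, T', hT⟩ := ih
    obtain ⟨S, hS⟩ := step (j + 1) T (by
      have : A (j + 1) * T = h • 1 - T' * A j := by rw [← hT]; abel
      rw [Matrix.mul_sub, ← Matrix.mul_assoc, this, Matrix.sub_mul, Matrix.mul_assoc, hcomp]
      simp)
    exact ⟨S, T, hS⟩

/-- For `h` annihilating `M` and regular on `R/q`, multiplication by `h` on `Tor(M, R/q)` is
zero, so the connecting map `Tor_{j+2}(M, R/(q + h)) → Tor_{j+1}(M, R/q)` is surjective;
hence vanishing descends. The ideal `q'` stands for `q + (h)`. -/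
lemma torVanishes_descend [∀ j, DecidableEq (σ j)]
    (hex : ∀ j, LinearMap.ker (A j).mulVecLin = LinearMap.range (A (j + 1)).mulVecLin) {h : R}
    (h0 : ∀ v : σ 0 → R, h • v ∈ LinearMap.range (A 0).mulVecLin)
    {q q' : Ideal R} (hle : q ≤ q') (hh : h ∈ q') (hq' : ∀ r ∈ q', ∃ c, r - h * c ∈ q)
    (hreg : ∀ r, h * r ∈ q → r ∈ q) {j : ℕ} (ht : TorVanishes A q' (j + 1)) :
    TorVanishes A q j := by
  intro v hv
  obtain ⟨S, T, hST⟩ := exists_homotopy hex h h0 j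
  have key : (A (j + 1)).mulVec (S.mulVec v) = h • v - T.mulVec ((A j).mulVec v) := by
    have := congrArg (fun B => B.mulVec v) hST
    simp only [Matrix.add_mulVec, Matrix.smul_mulVec, Matrix.one_mulVec] at this
    rw [Matrix.mulVec_mulVec, Matrix.mulVec_mulVec, ← this]; abel
  have hTq : ∀ g, T.mulVec ((A j).mulVec v) g ∈ q := mulVec_mem_ideal q T hv
  obtain ⟨w, hw⟩ := ht (S.mulVec v) (by
    intro g
    rw [key]
    exact q'.sub_mem (q'.mul_mem_right _ hh) (hle (hTq g)))
  choose c hc using fun g => hq' _ (hw g)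
  refine ⟨c, fun g => hreg _ ?_⟩
  have hzero : (A (j + 1)).mulVec ((A (j + 2)).mulVec w) = 0 := by
    have : (A (j + 2)).mulVec w ∈ LinearMap.ker (A (j + 1)).mulVecLin := by
      rw [hex]; exact ⟨w, rfl⟩
    simpa using this
  have h1 := mulVec_mem_ideal q (A (j + 1))
    (v := S.mulVec v - (A (j + 2)).mulVec w - h • c) hc g
  rw [Matrix.mulVec_sub, Matrix.mulVec_sub, hzero, key, Matrix.mulVec_smul] at h1
  have h2 := q.add_mem h1 (hTq g)
  convert h2 using 1
  simp
  ring

/-- Vanishing of `Tor_1(R/J, R/(a, d)) = H_1(a, d; R/J)` for an `R`-regular sequence `a, d`: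
every relation `a g = d f` in `R/J` is a multiple of the trivial one. -/
lemma mem_of_torVanishes_zero {J : Ideal R} {p : σ 0 → R}
    (hp : Ideal.span (Set.range p) ⊔ J = ⊤)
    (hA0 : ∀ v : σ 0 → R, (∑ g, v g * p g) ∈ J ↔ v ∈ LinearMap.range (A 0).mulVecLin)
    (hex : LinearMap.ker (A 0).mulVecLin = LinearMap.range (A 1).mulVecLin)
    {a d f g : R} (hreg : ∀ x y, a * x = d * y → a ∣ y)
    (ht : TorVanishes A (Ideal.span {a, d}) 0) (hrel : a * g - d * f ∈ J) :
    f ∈ Ideal.span {a} ⊔ J := by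
  obtain ⟨y, hy, z, hz, hyz⟩ := Submodule.mem_sup.1 (hp ▸ Submodule.mem_top : (1 : R) ∈ _)
  obtain ⟨e, he⟩ := (Ideal.mem_span_range_iff_exists_fun).1 hy
  obtain ⟨v, hv⟩ := (hA0 ((a * g - d * f) • e)).1 (by
    have : ∑ i, ((a * g - d * f) • e) i * p i = (a * g - d * f) * ∑ i, e i * p i := by
      rw [Finset.mul_sum]; exact Finset.sum_congr rfl fun i _ => by simp [mul_assoc]
    rw [this]; exact J.mul_mem_right _ hrel)
  rw [Matrix.mulVecLin_apply] at hv
  obtain ⟨w, hw⟩ := ht v (by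
    intro i
    rw [hv]
    have : a * g - d * f ∈ Ideal.span {a, d} :=
      Ideal.mem_span_pair.2 ⟨g, -f, by ring⟩
    exact Ideal.mul_mem_right _ _ this)
  choose v' v'' hvv using fun i => Ideal.mem_span_pair.1 (hw i)
  have hzero : (A 0).mulVec ((A 1).mulVec w) = 0 := by
    have : (A 1).mulVec w ∈ LinearMap.ker (A 0).mulVecLin := by
      rw [hex]; exact ⟨w, rfl⟩
    simpa using this
  have hdec : v - (A 1).mulVec w = a • v' + d • v'' := by
    ext i; rw [← hvv i]; simp [mul_comm]
  have h1 := congrArg (A 0).mulVec hdec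
  rw [Matrix.mulVec_sub, hzero, hv, Matrix.mulVec_add, Matrix.mulVec_smul,
    Matrix.mulVec_smul] at h1
  have h2 : ∀ i, a ∣ f * e i + (A 0).mulVec v'' i := by
    intro i
    apply hreg (g * e i - (A 0).mulVec v' i)
    have := congrFun h1 i
    simp at this
    linear_combination this
  choose t ht using h2
  have h3 : ∑ i, (A 0).mulVec v'' i * p i ∈ J := (hA0 _).2 ⟨v'', rfl⟩
  have h4 : f = a * ∑ i, t i * p i + (f * z - ∑ i, (A 0).mulVec v'' i * p i) := by
    have : a * ∑ i, t i * p i = f * ∑ i, e i * p i + ∑ i, (A 0).mulVec v'' i * p i := by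
      rw [Finset.mul_sum, Finset.mul_sum, ← Finset.sum_add_distrib]
      exact Finset.sum_congr rfl fun i _ => by linear_combination (-p i) * ht i
    rw [this, he]
    linear_combination (-f) * hyz
  rw [h4]
  exact Submodule.add_mem_sup (Ideal.mul_mem_right _ _ (Ideal.mem_span_singleton_self a))
    (J.sub_mem (J.mul_mem_left _ hz) h3)

end Homological

/-! ### Binomials and fibers of a lattice ideal -/

section LatticeIdeals

variable {V : Type*} (k : Type*) [Field k]

/-- The difference of two exponent vectors, as an integer vector. -/
def expDiff (p q : V →₀ ℕ) : V → ℤ := fun j => (p j : ℤ) - q j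

lemma monomial_sub_mem_latticeIdeal [Fintype V] {L : Submodule ℤ (V → ℤ)} {p q : V →₀ ℕ}
    (h : expDiff p q ∈ L) :
    monomial p (1 : k) - monomial q 1 ∈ latticeIdeal k L := by
  have hp : p = p ⊓ q + posExp (expDiff p q) := by
    ext j; simp [posExp, expDiff]; omega
  have hq : q = p ⊓ q + negExp (expDiff p q) := by
    ext j; simp [negExp, expDiff]; omega
  have : monomial p (1 : k) - monomial q 1 =
      monomial (p ⊓ q) 1 * latticeBinomial k (expDiff p q) := by
    rw [latticeBinomial, mul_sub, monomial_mul, monomial_mul, ← hp, ← hq, one_mul]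
  rw [this]
  exact Ideal.mul_mem_left _ _ (Ideal.subset_span ⟨_, h, rfl⟩)

lemma expDiff_pos_neg [Fintype V] (u : V → ℤ) : expDiff (posExp u) (negExp u) = u := by
  ext j; simp [posExp, negExp, expDiff]

open Classical in
/-- The linear functional summing the coefficients of a polynomial over the monomials in the
fiber `β + L`. It vanishes on the lattice ideal. -/
noncomputable def fiberSum (L : Submodule ℤ (V → ℤ)) (β : V →₀ ℕ) : MvPolynomial V k →ₗ[k] k :=
  (basisMonomials V k).constr k fun u => if expDiff u β ∈ L then 1 else 0

open Classical in
lemma fiberSum_monomial (L : Submodule ℤ (V → ℤ)) (β u : V →₀ ℕ) (c : k) :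
    fiberSum k L β (monomial u c) = if expDiff u β ∈ L then c else 0 := by
  have : monomial u c = c • basisMonomials V k u := by simp [smul_monomial]
  rw [this, map_smul, fiberSum, Module.Basis.constr_basis]
  simp

lemma fiberSum_eq_zero [Fintype V] {L : Submodule ℤ (V → ℤ)} (β : V →₀ ℕ) {r : MvPolynomial V k}
    (hr : r ∈ latticeIdeal k L) : fiberSum k L β r = 0 := by
  refine Submodule.span_induction (p := fun r _ => ∀ s, fiberSum k L β (s * r) = 0)
    ?_ ?_ ?_ ?_ hr 1 |> fun h => by simpa using h
  · rintro _ ⟨u, hu, rfl⟩ s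
    induction s using MvPolynomial.induction_on' with
    | monomial v c =>
      rw [latticeBinomial, mul_sub, monomial_mul, monomial_mul, map_sub, fiberSum_monomial,
        fiberSum_monomial]
      have : expDiff (v + posExp u) β = expDiff (v + negExp u) β + u := by
        ext j
        have := congrFun (expDiff_pos_neg u) j
        simp only [expDiff, Finsupp.add_apply, Nat.cast_add, Pi.add_apply] at this ⊢
        linarith
      have h2 : expDiff (v + posExp u) β ∈ L ↔ expDiff (v + negExp u) β ∈ L := by
        rw [this]; exact L.add_mem_iff_left hu
      by_cases hc : expDiff (v + negExp u) β ∈ L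
      · rw [if_pos (h2.2 hc), if_pos hc, sub_self]
      · rw [if_neg (h2.not.2 hc), if_neg hc, sub_self]
    | add p q hp hq => rw [add_mul, map_add, hp, hq, add_zero]
  · simp
  · intro x y _ _ hx hy s; rw [mul_add, map_add, hx, hy, add_zero]
  · intro c x _ hx s; rw [smul_eq_mul, ← mul_assoc]; exact hx _

/-- If no monomial of the fiber `β + L` is divisible by the variable `x_a`, then `x^β` does not
vanish modulo `x_a` in `k[x]/I_L`. -/
lemma monomial_notMem_sup [Fintype V] {L : Submodule ℤ (V → ℤ)} {β : V →₀ ℕ} {a : V}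
    (h : ∀ u : V →₀ ℕ, expDiff u β ∈ L → u a = 0) :
    monomial β (1 : k) ∉ Ideal.span {X a} ⊔ latticeIdeal k L := by
  intro hmem
  obtain ⟨y, hy, z, hz, hyz⟩ := Submodule.mem_sup.1 hmem
  obtain ⟨r, rfl⟩ := Ideal.mem_span_singleton'.1 hy
  have h1 : ∀ r : MvPolynomial V k, fiberSum k L β (r * X a) = 0 := by
    intro r
    induction r using MvPolynomial.induction_on' with
    | monomial v c =>
      rw [X, monomial_mul, fiberSum_monomial, if_neg]
      intro hL
      simpa using h _ hL
    | add p q hp hq => rw [add_mul, map_add, hp, hq, add_zero]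
  have h2 := congrArg (fiberSum k L β) hyz
  have h3 : expDiff β β = 0 := by ext j; simp [expDiff]
  rw [map_add, h1, fiberSum_eq_zero k β hz, fiberSum_monomial, h3, if_pos L.zero_mem] at h2
  simp at h2

/-! ### A criterion for not being Cohen–Macaulay -/

/-- The exponents of `x_a, x_d, x_{ι 0}^{N 0}, …, x_{ι (i-1)}^{N (i-1)}`. -/
def regExponents {m : ℕ} (ι : Fin m → V) (N : Fin m → ℕ) (a d : V) (i : ℕ) : Set (V →₀ ℕ) :=
  {Finsupp.single a 1, Finsupp.single d 1} ∪
    {s | ∃ j : Fin m, (j : ℕ) < i ∧ s = Finsupp.single (ι j) (N j)}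

/-- The ideal generated by `x_a, x_d, x_{ι 0}^{N 0}, …, x_{ι (i-1)}^{N (i-1)}`. -/
noncomputable def regIdeal {m : ℕ} (ι : Fin m → V) (N : Fin m → ℕ) (a d : V) (i : ℕ) :
    Ideal (MvPolynomial V k) :=
  Ideal.span ((fun s => monomial s (1 : k)) '' regExponents ι N a d i)

lemma mem_regIdeal_of_mul {m : ℕ} {ι : Fin m → V} (hι : Function.Injective ι) (N : Fin m → ℕ)
    {a d : V} (ha : ∀ i, ι i ≠ a) (hd : ∀ i, ι i ≠ d) (i : Fin m) {r : MvPolynomial V k}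
    (hr : monomial (Finsupp.single (ι i) (N i)) 1 * r ∈ regIdeal k ι N a d i) :
    r ∈ regIdeal k ι N a d i := by
  classical
  rw [regIdeal, mem_ideal_span_monomial_image] at hr ⊢
  intro ξ hξ
  obtain ⟨s, hs, hle⟩ := hr (Finsupp.single (ι i) (N i) + ξ) (by
    rw [mem_support_iff] at hξ ⊢
    rw [coeff_monomial_mul]; simpa using hξ)
  refine ⟨s, hs, ?_⟩
  have main : ∀ (b : V) (n : ℕ), ι i ≠ b → Finsupp.single b n ≤ Finsupp.single (ι i) (N i) + ξ →
      Finsupp.single b n ≤ ξ := by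
    intro b n hb h
    rw [Finsupp.single_le_iff] at h ⊢
    simpa [Finsupp.single_eq_of_ne' hb] using h
  rcases hs with (rfl | rfl) | ⟨j, hj, rfl⟩
  · exact main _ _ (ha i) hle
  · exact main _ _ (hd i) hle
  · refine main _ _ (fun h => ?_) hle
    rw [hι h] at hj
    exact lt_irrefl _ hj

/-- Suppose that `L` has rank `m` and contains `N_i e_{ι i} - w_i` for `m` distinct indices
`ι i` other than `a` and `d`, with `w_i` involving `a` or `d` (so that modulo `x_a, x_d` the
binomial of this vector is a power of `x_{ι i}`). If `x_a x^γ = x_d x^β` in `k[x]/I_L` while no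
monomial of the fiber of `β` is divisible by `x_a`, then `x_a, x_d` is not a regular sequence on
`k[x]/I_L`, and `k[x]/I_L` is not Cohen–Macaulay. -/
lemma not_isCM [Fintype V] {m : ℕ} {L : Submodule ℤ (V → ℤ)} (hrank : latticeRank L = m)
    {ι : Fin m → V} (hι : Function.Injective ι) (N : Fin m → ℕ) {a d : V} (had : a ≠ d)
    (ha : ∀ i, ι i ≠ a) (hd : ∀ i, ι i ≠ d) (w : Fin m → V →₀ ℕ)
    (hw : ∀ i, w i a ≠ 0 ∨ w i d ≠ 0)
    (hL : ∀ i, expDiff (Finsupp.single (ι i) (N i)) (w i) ∈ L) {β γ : V →₀ ℕ}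
    (hrel : expDiff (Finsupp.single a 1 + γ) (Finsupp.single d 1 + β) ∈ L)
    (hβ : ∀ u : V →₀ ℕ, expDiff u β ∈ L → u a = 0) :
    ¬ IsCMLatticeQuotient k L := by
  classical
  rintro ⟨σ, hfin, A, p, hempty, hp, hA0, hex⟩
  rw [hrank] at hempty
  set J := latticeIdeal k L
  let h : Fin m → MvPolynomial V k := fun i =>
    monomial (Finsupp.single (ι i) (N i)) 1 - monomial (w i) 1
  have hJ : ∀ i, h i ∈ J := fun i => monomial_sub_mem_latticeIdeal k (hL i)
  have h0 : ∀ r ∈ J, ∀ v : σ 0 → MvPolynomial V k,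
      r • v ∈ LinearMap.range (A 0).mulVecLin := by
    intro r hr v
    rw [← hA0]
    exact J.sum_mem fun g _ => J.mul_mem_right _ (J.mul_mem_right _ hr)
  -- Modulo `(x_a, x_d)` the binomial `h i` is the power of `x_{ι i}`.
  have hwmem : ∀ i n, monomial (w i) (1 : k) ∈ regIdeal k ι N a d n := by
    intro i n
    rw [regIdeal, mem_ideal_span_monomial_image]
    intro ξ hξ
    obtain rfl : ξ = w i := by simpa using support_monomial_subset hξ
    rcases hw i with h | h
    · exact ⟨Finsupp.single a 1, by simp [regExponents], by
        rw [Finsupp.single_le_iff]; omega⟩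
    · exact ⟨Finsupp.single d 1, by simp [regExponents], by
        rw [Finsupp.single_le_iff]; omega⟩
  have hT : ∀ c i, i + c = m → TorVanishes A (regIdeal k ι N a d i) i := by
    intro c
    induction c with
    | zero =>
      rintro i rfl v -
      have := hempty (i + 1) (by omega)
      exact ⟨0, fun g => isEmptyElim g⟩
    | succ c ih =>
      intro i hi
      have him : i < m := by omega
      have hle : regIdeal k ι N a d i ≤ regIdeal k ι N a d (i + 1) := by
        refine Ideal.span_mono (Set.image_mono (Set.union_subset_union_right _ ?_))
        rintro _ ⟨j, hj, rfl⟩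
        exact ⟨j, by omega, rfl⟩
      refine torVanishes_descend hex (h := h ⟨i, him⟩) (h0 _ (hJ _)) hle ?_ ?_ ?_
        (ih (i + 1) (by omega))
      · refine Ideal.sub_mem _ (Ideal.subset_span ⟨_, Or.inr ⟨⟨i, him⟩, ?_, rfl⟩, rfl⟩)
          (hwmem _ _)
        simp
      · intro r hr
        refine Submodule.span_induction (p := fun r _ => ∃ c, r - h ⟨i, him⟩ * c ∈
          regIdeal k ι N a d i) ?_ ?_ ?_ ?_ hr
        · rintro _ ⟨s, hs | ⟨j, hj, rfl⟩, rfl⟩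
          · exact ⟨0, by
              rw [mul_zero, sub_zero]; exact Ideal.subset_span ⟨s, Or.inl hs, rfl⟩⟩
          · rcases Nat.lt_succ_iff_lt_or_eq.1 hj with hj | hj
            · exact ⟨0, by
                rw [mul_zero, sub_zero]
                exact Ideal.subset_span ⟨_, Or.inr ⟨j, hj, rfl⟩, rfl⟩⟩
            · obtain rfl : j = ⟨i, him⟩ := Fin.ext hj
              exact ⟨1, by simpa [h] using hwmem ⟨i, him⟩ i⟩
        · exact ⟨0, by simp⟩
        · rintro x y _ _ ⟨c, hc⟩ ⟨c', hc'⟩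
          refine ⟨c + c', ?_⟩
          convert Ideal.add_mem _ hc hc' using 1
          ring
        · rintro x y _ ⟨c, hc⟩
          refine ⟨x * c, ?_⟩
          convert Ideal.mul_mem_left _ x hc using 1
          simp only [smul_eq_mul]
          ring
      · intro r hr
        refine mem_regIdeal_of_mul k hι N ha hd ⟨i, him⟩ ?_
        have := Ideal.add_mem _ hr (Ideal.mul_mem_right r _ (hwmem ⟨i, him⟩ i))
        convert this using 1
        simp only [h]
        ring
  have hT0 : TorVanishes A (Ideal.span {(X a : MvPolynomial V k), X d}) 0 := by
    convert hT m 0 (by simp) using 1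
    simp [regIdeal, regExponents, Set.image_pair, X]
  refine monomial_notMem_sup k hβ ?_
  refine mem_of_torVanishes_zero hp hA0 (hex 0) (g := monomial γ 1) ?_ hT0 ?_
  · intro x y hxy
    rcases X_prime.dvd_or_dvd (Dvd.intro _ hxy : (X a : MvPolynomial V k) ∣ X d * y) with h | h
    · exact absurd (X_dvd_X.1 h) had
    · exact h
  · simpa [X, monomial_mul] using monomial_sub_mem_latticeIdeal k hrel

/-! ### Lattices with a triangular basis -/

section Triangular

variable {m : ℕ} (ι : Fin m → V) (N : Fin m → ℕ) (w : Fin m → V →₀ ℕ)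

/-- The vectors `N_i e_{ι i} - w_i`. -/
noncomputable def triGen (i : Fin m) : V → ℤ := expDiff (Finsupp.single (ι i) (N i)) (w i)

/-- The lattice spanned by the vectors `N_i e_{ι i} - w_i`. -/
noncomputable def triLattice : Submodule ℤ (V → ℤ) :=
  Submodule.span ℤ (Set.range (triGen ι N w))

variable {ι N w}

lemma triGen_mem (i : Fin m) : triGen ι N w i ∈ triLattice ι N w :=
  Submodule.subset_span ⟨i, rfl⟩

lemma triSum_apply (hι : Function.Injective ι) (hw : ∀ i j, w i (ι j) = 0) (c : Fin m → ℤ)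
    (j : Fin m) : (∑ i, c i • triGen ι N w i) (ι j) = c j * N j := by
  rw [Finset.sum_apply, Finset.sum_eq_single j]
  · simp [triGen, expDiff, hw]
  · intro i _ hij
    simp [triGen, expDiff, hw, Finsupp.single_eq_of_ne' (hι.ne hij)]
  · simp

lemma triLattice_rank (hι : Function.Injective ι) (hw : ∀ i j, w i (ι j) = 0)
    (hN : ∀ i, N i ≠ 0) : latticeRank (triLattice ι N w) = m := by
  have : LinearIndependent ℤ (triGen ι N w) := by
    rw [Fintype.linearIndependent_iff]
    intro c hc j
    have := triSum_apply (N := N) hι hw c j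
    rw [hc] at this
    simpa [hN j] using this
  rw [latticeRank, triLattice, finrank_span_eq_card this, Fintype.card_fin]

lemma toNat_mul_natCast (x : ℤ) (n : ℕ) : (x * n).toNat = x.toNat * n := by
  rcases le_total 0 x with hx | hx
  · obtain ⟨y, rfl⟩ := Int.eq_ofNat_of_zero_le hx
    rw [Int.toNat_natCast]
    exact_mod_cast Int.toNat_natCast (y * n)
  · rw [Int.toNat_of_nonpos hx, zero_mul,
      Int.toNat_of_nonpos (mul_nonpos_of_nonpos_of_nonneg hx (by positivity))]

/-- The defining binomials of a triangular basis already generate the lattice ideal. For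
`u = ∑ c_i (N_i e_{ι i} - w_i)`, replacing every `x_{ι i}^{N_i}` by `x^{w_i}` turns both
`x^{u₊}` and `x^{u₋}` into the same monomial. -/
lemma isCI_triLattice [Fintype V] (hι : Function.Injective ι) (hw : ∀ i j, w i (ι j) = 0) :
    IsCI (latticeIdeal k (triLattice ι N w)) m := by
  classical
  let h : Fin m → MvPolynomial V k := fun i =>
    monomial (Finsupp.single (ι i) (N i)) 1 - monomial (w i) 1
  refine ⟨h, le_antisymm ?_ ?_⟩
  · rw [Ideal.span_le]
    rintro _ ⟨i, rfl⟩
    exact monomial_sub_mem_latticeIdeal k (triGen_mem i)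
  rw [latticeIdeal, Ideal.span_le]
  rintro _ ⟨u, hu, rfl⟩
  obtain ⟨c, rfl⟩ := (Submodule.mem_span_range_iff_exists_fun ℤ).1 hu
  set J := Ideal.span (Set.range h)
  -- Exponents before (`C e`) and after (`W e`) the replacement.
  let C : (Fin m → ℕ) → V →₀ ℕ := fun e => ∑ i, e i • Finsupp.single (ι i) (N i)
  let W : (Fin m → ℕ) → V →₀ ℕ := fun e => ∑ i, e i • w i
  have hCW : ∀ e, monomial (C e) (1 : k) - monomial (W e) 1 ∈ J := by
    intro e
    rw [← Ideal.Quotient.eq]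
    have hmon : ∀ s : Fin m → V →₀ ℕ, monomial (∑ i, e i • s i) (1 : k) =
        ∏ i, monomial (s i) (1 : k) ^ e i := by
      intro s
      rw [monomial_sum_one]
      exact Finset.prod_congr rfl fun i _ => by rw [monomial_pow, one_pow]
    rw [hmon, hmon, map_prod, map_prod]
    refine Finset.prod_congr rfl fun i _ => ?_
    rw [map_pow, map_pow]
    congr 1
    rw [Ideal.Quotient.eq]
    exact Ideal.subset_span ⟨i, rfl⟩
  have hC : ∀ e i, C e (ι i) = e i * N i := by
    intro e i
    simp only [C, Finsupp.finsetSum_apply, Finsupp.smul_apply]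
    rw [Finset.sum_eq_single i]
    · simp
    · intro j _ hj
      simp [Finsupp.single_eq_of_ne' (hι.ne hj)]
    · simp
  have hC' : ∀ e j, (∀ i, ι i ≠ j) → C e j = 0 := by
    intro e j hj
    simp only [C, Finsupp.finsetSum_apply, Finsupp.smul_apply]
    exact Finset.sum_eq_zero fun i _ => by simp [Finsupp.single_eq_of_ne' (hj i)]
  have hW : ∀ e i, W e (ι i) = 0 := by
    intro e i
    simp [W, Finsupp.finsetSum_apply, hw]
  let e₁ : Fin m → ℕ := fun i => (c i).toNat
  let e₂ : Fin m → ℕ := fun i => (-c i).toNat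
  let ω : V → ℤ := expDiff (W e₂) (W e₁)
  have hoff : ∀ j, (∀ i, ι i ≠ j) → (∑ i, c i • triGen ι N w i) j = ω j := by
    intro j hj
    simp only [ω, expDiff, W, Finset.sum_apply, Finsupp.finsetSum_apply, Finsupp.smul_apply,
      Pi.smul_apply, triGen, Finsupp.single_eq_of_ne' (hj _)]
    push_cast
    rw [← Finset.sum_sub_distrib]
    refine Finset.sum_congr rfl fun i _ => ?_
    have : c i = (e₁ i : ℤ) - e₂ i := by simp only [e₁, e₂]; omega
    rw [this]
    simp
    ring
  have hpos : posExp (∑ i, c i • triGen ι N w i) = C e₁ + posExp ω := by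
    ext j
    by_cases hj : ∃ i, ι i = j
    · obtain ⟨i, rfl⟩ := hj
      have hω : ω (ι i) = 0 := by simp [ω, expDiff, hW]
      simp only [posExp, Finsupp.add_apply, Finsupp.equivFunOnFinite_symm_apply_apply, hC,
        triSum_apply hι hw, hω, e₁]
      rw [toNat_mul_natCast, Int.toNat_zero, add_zero]
    · have hj' : ∀ i, ι i ≠ j := fun i hi => hj ⟨i, hi⟩
      simp only [posExp, Finsupp.add_apply, Finsupp.equivFunOnFinite_symm_apply_apply,
        hC' _ _ hj', hoff j hj', zero_add]
  have hneg : negExp (∑ i, c i • triGen ι N w i) = C e₂ + negExp ω := by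
    ext j
    by_cases hj : ∃ i, ι i = j
    · obtain ⟨i, rfl⟩ := hj
      have hω : ω (ι i) = 0 := by simp [ω, expDiff, hW]
      simp only [negExp, Finsupp.add_apply, Finsupp.equivFunOnFinite_symm_apply_apply, hC,
        triSum_apply hι hw, hω, e₂, ← neg_mul]
      rw [toNat_mul_natCast, neg_zero, Int.toNat_zero, add_zero]
    · have hj' : ∀ i, ι i ≠ j := fun i hi => hj ⟨i, hi⟩
      simp only [negExp, Finsupp.add_apply, Finsupp.equivFunOnFinite_symm_apply_apply,
        hC' _ _ hj', hoff j hj', zero_add]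
  have hWeq : W e₁ + posExp ω = W e₂ + negExp ω := by
    ext j
    simp [posExp, negExp, ω, expDiff]
    omega
  have : latticeBinomial k (∑ i, c i • triGen ι N w i) =
      (monomial (C e₁) 1 - monomial (W e₁) 1) * monomial (posExp ω) 1 -
      (monomial (C e₂) 1 - monomial (W e₂) 1) * monomial (negExp ω) 1 := by
    rw [latticeBinomial, hpos, hneg, sub_mul, sub_mul, monomial_mul, monomial_mul, monomial_mul,
      monomial_mul, hWeq, mul_one]
    ring
  rw [this]
  exact J.sub_mem (J.mul_mem_right _ (hCW _)) (J.mul_mem_right _ (hCW _))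

lemma le_saturation (L : Submodule ℤ (V → ℤ)) : L ≤ saturation L :=
  fun u hu => ⟨1, one_pos, by simpa using hu⟩

/-- If all `N_i` are `1`, the lattice is the graph of a linear map in the coordinates `ι i`,
hence saturated. -/
lemma saturation_triLattice_le (hι : Function.Injective ι) (hw : ∀ i j, w i (ι j) = 0)
    (hN : ∀ i, N i = 1) : saturation (triLattice ι N w) ≤ triLattice ι N w := by
  rintro u ⟨n, hn, hu⟩
  obtain ⟨c, hc⟩ := (Submodule.mem_span_range_iff_exists_fun ℤ).1 hu
  have hcu : ∀ i, c i = n * u (ι i) := by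
    intro i
    have := triSum_apply (N := N) hι hw c i
    rw [hc, hN] at this
    simpa using this.symm
  have : u = ∑ i, u (ι i) • triGen ι N w i := by
    have h2 : (n : ℤ) • u = (n : ℤ) • ∑ i, u (ι i) • triGen ι N w i := by
      rw [← hc, Finset.smul_sum]
      exact Finset.sum_congr rfl fun i _ => by rw [hcu, mul_smul]
    exact smul_right_injective _ (by exact_mod_cast hn.ne') h2
  rw [this]
  exact Submodule.sum_mem _ fun i _ => Submodule.smul_mem _ _ (triGen_mem i)

end Triangular

/-- A lattice between `L` and its saturation has the rank of `L`. -/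
lemma latticeRank_eq [Fintype V] {L L' : Submodule ℤ (V → ℤ)} (hle : L ≤ L')
    (h : L' ≤ saturation L) : latticeRank L = latticeRank L' := by
  have h1 := Submodule.finrank_quotient_add_finrank (L.submoduleOf L')
  have h2 : Module.finrank ℤ (L' ⧸ L.submoduleOf L') = 0 := by
    rw [Module.finrank_eq_zero_iff_isTorsion]
    intro x
    obtain ⟨x, rfl⟩ := Submodule.Quotient.mk_surjective _ x
    obtain ⟨n, hn, hx⟩ := h x.2
    refine ⟨⟨n, mem_nonZeroDivisors_of_ne_zero (by exact_mod_cast hn.ne')⟩, ?_⟩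
    change (n : ℤ) • (Submodule.Quotient.mk x : L' ⧸ L.submoduleOf L') = 0
    rw [← Submodule.Quotient.mk_smul, Submodule.Quotient.mk_eq_zero]
    exact hx
  rw [h2, zero_add, (Submodule.submoduleOfEquivOfLe hle).finrank_eq] at h1
  exact h1

/-- A linear functional vanishing on `L` vanishes on the saturation of `L`. -/
lemma eq_zero_of_mem_saturation {L : Submodule ℤ (V → ℤ)} (φ : (V → ℤ) →ₗ[ℤ] ℤ)
    (h : ∀ u ∈ L, φ u = 0) {u : V → ℤ} (hu : u ∈ saturation L) : φ u = 0 := by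
  obtain ⟨n, hn, hu⟩ := hu
  have := h _ hu
  rw [map_smul, smul_eq_mul] at this
  rcases mul_eq_zero.1 this with h | h
  · exact absurd h (by exact_mod_cast hn.ne')
  · exact h

/-- The functional sending an integer vector to the sum of its coordinates. -/
def coordSum [Fintype V] : (V → ℤ) →ₗ[ℤ] ℤ := ∑ j, LinearMap.proj j

lemma coordSum_expDiff [Fintype V] (p q : V →₀ ℕ) :
    coordSum (expDiff p q) = (p.degree : ℤ) - q.degree := by
  simp [coordSum, expDiff, Finsupp.degree_eq_sum]

lemma isPositiveLattice_of_coordSum [Fintype V] {L : Submodule ℤ (V → ℤ)}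
    (h : ∀ u ∈ L, coordSum u = 0) : IsPositiveLattice L := by
  intro u hu hpos
  have h1 : ∑ j, u j = 0 := by simpa [coordSum] using h u hu
  funext j
  exact (Finset.sum_eq_zero_iff_of_nonneg fun i _ => hpos i).1 h1 j (Finset.mem_univ j)

lemma eq_zero_of_mem_triLattice {m : ℕ} {ι : Fin m → V} {N : Fin m → ℕ} {w : Fin m → V →₀ ℕ}
    (φ : (V → ℤ) →ₗ[ℤ] ℤ) (h : ∀ i, φ (triGen ι N w i) = 0) {u : V → ℤ}
    (hu : u ∈ triLattice ι N w) : φ u = 0 := by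
  have : triLattice ι N w ≤ LinearMap.ker φ := by
    rw [triLattice, Submodule.span_le]
    rintro _ ⟨i, rfl⟩
    exact h i
  exact this hu

/-! ### The two families -/

section Families

variable {m : ℕ} (t : ℕ)

/-- The index of the `i`-th of the `m` variables carrying a defining binomial. The ambient
variables are these, the two variables `a` and `d`, and `t` further variables that occur in no
element of the lattices. -/
def pivot (i : Fin m) : Fin (m + 2 + t) := ⟨i, by omega⟩

/-- The index of the variable `a`. -/
def idxA (m t : ℕ) : Fin (m + 2 + t) := ⟨m, by omega⟩

/-- The index of the variable `d`. -/
def idxD (m t : ℕ) : Fin (m + 2 + t) := ⟨m + 1, by omega⟩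

lemma pivot_val (i : Fin m) : (pivot t i : ℕ) = i := rfl

lemma idxA_val : (idxA m t : ℕ) = m := rfl

lemma idxD_val : (idxD m t : ℕ) = m + 1 := rfl

lemma pivot_injective : Function.Injective (pivot (m := m) t) := by
  intro i j h
  simpa [pivot, Fin.ext_iff] using h

lemma pivot_ne_idxA (i : Fin m) : pivot t i ≠ idxA m t := by
  simp only [pivot, idxA, ne_eq, Fin.ext_iff]; omega

lemma pivot_ne_idxD (i : Fin m) : pivot t i ≠ idxD m t := by
  simp only [pivot, idxD, ne_eq, Fin.ext_iff]; omega

lemma idxA_ne_idxD : idxA m t ≠ idxD m t := by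
  simp [idxA, idxD]

/-- Exponents of the pivot variables `b, c, z_2, …, z_{m-1}` in `quarticLattice`. -/
def quarticN (i : Fin m) : ℕ := if (i : ℕ) < 2 then 4 else 1

/-- The vectors `3a + d`, `a + 3d`, `a, …, a`. -/
noncomputable def quarticW (i : Fin m) : Fin (m + 2 + t) →₀ ℕ :=
  if (i : ℕ) = 0 then Finsupp.single (idxA m t) 3 + Finsupp.single (idxD m t) 1
  else if (i : ℕ) = 1 then Finsupp.single (idxA m t) 1 + Finsupp.single (idxD m t) 3
  else Finsupp.single (idxA m t) 1

/-- The lattice of `(b⁴ - a³d, c⁴ - ad³, z_i - a)`. Its saturation contains the lattice of the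
rational quartic curve `(s⁴, s³t, st³, t⁴)`. -/
noncomputable def quarticLattice (m t : ℕ) : Submodule ℤ (Fin (m + 2 + t) → ℤ) :=
  triLattice (pivot (m := m) t) quarticN (quarticW t)

/-- The vectors `a, d, a, …, a`. -/
noncomputable def linearW (i : Fin m) : Fin (m + 2 + t) →₀ ℕ :=
  if (i : ℕ) = 1 then Finsupp.single (idxD m t) 1 else Finsupp.single (idxA m t) 1

/-- The lattice of the linear ideal `(b - a, c - d, z_i - a)`. -/
noncomputable def linearLattice (m t : ℕ) : Submodule ℤ (Fin (m + 2 + t) → ℤ) :=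
  triLattice (pivot (m := m) t) (fun _ => 1) (linearW t)

/-- The functional `u ↦ u_b + u_c`. -/
def bcSum (hm : 2 ≤ m) : (Fin (m + 2 + t) → ℤ) →ₗ[ℤ] ℤ :=
  LinearMap.proj (R := ℤ) (φ := fun _ => ℤ) (pivot t (⟨0, by omega⟩ : Fin m)) +
    LinearMap.proj (R := ℤ) (φ := fun _ => ℤ) (pivot t (⟨1, by omega⟩ : Fin m))

/-- The index-two sublattice of `linearLattice` on which `u_b + u_c` is even. In characteristic
other than two, its lattice ideal defines a union of two linear spaces, meeting in codimension
two in each of them. -/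
noncomputable def twoPlanesLattice (hm : 2 ≤ m) (t : ℕ) :
    Submodule ℤ (Fin (m + 2 + t) → ℤ) :=
  linearLattice m t ⊓ Submodule.comap (bcSum t hm) (Ideal.span {(2 : ℤ)})

lemma quarticW_pivot (i j : Fin m) : quarticW t i (pivot t j) = 0 := by
  unfold quarticW
  split_ifs <;> simp [Finsupp.single_eq_of_ne (pivot_ne_idxA t j),
    Finsupp.single_eq_of_ne (pivot_ne_idxD t j)]

lemma linearW_pivot (i j : Fin m) : linearW t i (pivot t j) = 0 := by
  unfold linearW
  split_ifs <;> simp [Finsupp.single_eq_of_ne (pivot_ne_idxA t j),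
    Finsupp.single_eq_of_ne (pivot_ne_idxD t j)]

lemma coordSum_quartic {u : Fin (m + 2 + t) → ℤ} (hu : u ∈ saturation (quarticLattice m t)) :
    coordSum u = 0 := by
  refine eq_zero_of_mem_saturation _ (fun u hu => eq_zero_of_mem_triLattice _ (fun i => ?_) hu) hu
  rw [triGen, coordSum_expDiff]
  unfold quarticW quarticN
  split_ifs <;> first | omega | simp

lemma coordSum_linear {u : Fin (m + 2 + t) → ℤ} (hu : u ∈ linearLattice m t) :
    coordSum u = 0 := by
  refine eq_zero_of_mem_triLattice _ (fun i => ?_) hu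
  rw [triGen, coordSum_expDiff]
  unfold linearW
  split_ifs <;> simp

/-- The weight of the second parameter of the rational quartic curve, `(a, b, c, d)` having
weights `(0, 1, 3, 4)`, vanishes on the saturated lattice. -/
lemma weight_quartic (hm : 2 ≤ m) {u : Fin (m + 2 + t) → ℤ}
    (hu : u ∈ saturation (quarticLattice m t)) :
    u (pivot t ⟨0, by omega⟩) + 3 * u (pivot t ⟨1, by omega⟩) + 4 * u (idxD m t) = 0 := by
  let φ : (Fin (m + 2 + t) → ℤ) →ₗ[ℤ] ℤ := LinearMap.proj (pivot t (⟨0, by omega⟩ : Fin m)) +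
    (3 : ℤ) • LinearMap.proj (pivot t (⟨1, by omega⟩ : Fin m)) + (4 : ℤ) • LinearMap.proj (idxD m t)
  have : φ u = 0 := by
    refine eq_zero_of_mem_saturation _
      (fun u hu => eq_zero_of_mem_triLattice _ (fun i => ?_) hu) hu
    simp only [φ, triGen, expDiff, LinearMap.add_apply, LinearMap.smul_apply, LinearMap.proj_apply,
      quarticW_pivot]
    rw [Finsupp.single_eq_of_ne' (pivot_ne_idxD t i)]
    unfold quarticW quarticN
    simp only [Finsupp.single_apply, pivot_val, Fin.ext_iff]
    split_ifs <;> first | omega | simp [Finsupp.single_eq_of_ne' (idxA_ne_idxD t)]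
  simpa [φ] using this

/-- `2 (a + 2c - d - 2b)` lies in the lattice. -/
lemma quartic_relation (hm : 2 ≤ m) :
    expDiff (Finsupp.single (idxA m t) 1 + Finsupp.single (pivot t ⟨1, by omega⟩) 2)
      (Finsupp.single (idxD m t) 1 + Finsupp.single (pivot t ⟨0, by omega⟩) 2) ∈
      saturation (quarticLattice m t) := by
  refine ⟨2, two_pos, ?_⟩
  have h := Submodule.sub_mem _
    (triGen_mem (ι := pivot (m := m) t) (N := quarticN) (w := quarticW t) ⟨1, by omega⟩)
    (triGen_mem (ι := pivot (m := m) t) (N := quarticN) (w := quarticW t) ⟨0, by omega⟩)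
  have heq : ((2 : ℕ) : ℤ) • expDiff
      (Finsupp.single (idxA m t) 1 + Finsupp.single (pivot t (⟨1, by omega⟩ : Fin m)) 2)
      (Finsupp.single (idxD m t) 1 + Finsupp.single (pivot t (⟨0, by omega⟩ : Fin m)) 2) =
      triGen (pivot (m := m) t) quarticN (quarticW t) ⟨1, by omega⟩ -
        triGen (pivot (m := m) t) quarticN (quarticW t) ⟨0, by omega⟩ := by
    funext j
    simp only [Pi.smul_apply, Pi.sub_apply, smul_eq_mul, triGen, expDiff, quarticN, quarticW,
      if_true, one_ne_zero, if_false, Nat.zero_lt_two, Nat.one_lt_two, Finsupp.add_apply,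
      Finsupp.single_apply, Fin.ext_iff, pivot_val, idxA_val, idxD_val]
    split_ifs <;> omega
  rw [heq]
  exact h

lemma quartic_not_saturated (hm : 2 ≤ m) :
    saturation (quarticLattice m t) ≠ quarticLattice m t := by
  intro heq
  have h := quartic_relation t hm
  rw [heq] at h
  obtain ⟨c, hc⟩ := (Submodule.mem_span_range_iff_exists_fun ℤ).1 h
  -- The `b`-coordinate of every lattice vector is divisible by four.
  have h1 := triSum_apply (N := quarticN) (pivot_injective t) (quarticW_pivot t) c ⟨0, by omega⟩
  rw [hc] at h1
  simp only [expDiff, quarticN, Finsupp.add_apply, Finsupp.single_apply, Fin.ext_iff, pivot_val,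
    idxA_val, idxD_val] at h1
  split_ifs at h1 <;> omega

lemma quartic_not_isCM (hm : 2 ≤ m) :
    ¬ IsCMLatticeQuotient k (saturation (quarticLattice m t)) := by
  have hrank : latticeRank (saturation (quarticLattice m t)) = m := by
    rw [← latticeRank_eq (le_saturation (quarticLattice m t)) le_rfl]
    refine triLattice_rank (pivot_injective t) (quarticW_pivot t) fun i => ?_
    unfold quarticN
    split_ifs <;> omega
  refine not_isCM k hrank (pivot_injective t) quarticN (idxA_ne_idxD t) (pivot_ne_idxA t)
    (pivot_ne_idxD t) (quarticW t) (fun i => Or.inl ?_)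
    (fun i => le_saturation _ (triGen_mem i)) (quartic_relation t hm) ?_
  · unfold quarticW
    split_ifs <;> simp
  · intro u hu
    have h1 := weight_quartic t hm hu
    have h2 := coordSum_quartic t hu
    rw [coordSum_expDiff, Finsupp.degree_single] at h2
    simp only [expDiff, Finsupp.single_apply, Fin.ext_iff, pivot_val, idxD_val, if_true,
      zero_ne_one, if_false] at h1
    have h3 : u (idxA m t) + u (pivot t ⟨0, by omega⟩) ≤ u.degree := by
      rw [Finsupp.degree_eq_sum, ← Finset.sum_pair (pivot_ne_idxA t ⟨0, by omega⟩).symm]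
      exact Finset.sum_le_sum_of_subset (Finset.subset_univ _)
    rw [if_neg (by omega)] at h1
    have hc : u (pivot t ⟨1, by omega⟩) = 0 := by omega
    have hd : u (idxD m t) = 0 := by omega
    omega

lemma linear_le_saturation (hm : 2 ≤ m) :
    linearLattice m t ≤ saturation (twoPlanesLattice hm t) := by
  intro u hu
  refine ⟨2, two_pos, Submodule.smul_mem _ _ hu, ?_⟩
  rw [SetLike.mem_coe, Submodule.mem_comap, map_smul, Ideal.mem_span_singleton]
  exact Dvd.intro _ rfl

lemma saturation_twoPlanes (hm : 2 ≤ m) :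
    saturation (twoPlanesLattice hm t) = linearLattice m t := by
  refine le_antisymm ?_ (linear_le_saturation t hm)
  rintro u ⟨n, hn, hu⟩
  exact saturation_triLattice_le (pivot_injective t) (linearW_pivot t) (fun _ => rfl)
    ⟨n, hn, hu.1⟩

lemma twoPlanes_rank (hm : 2 ≤ m) : latticeRank (twoPlanesLattice hm t) = m := by
  rw [latticeRank_eq (L := twoPlanesLattice hm t) inf_le_left (linear_le_saturation t hm)]
  exact triLattice_rank (pivot_injective t) (linearW_pivot t) fun i => one_ne_zero

lemma mem_twoPlanes (hm : 2 ≤ m) {u : Fin (m + 2 + t) → ℤ} :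
    u ∈ twoPlanesLattice hm t ↔ u ∈ linearLattice m t ∧
      2 ∣ u (pivot t ⟨0, by omega⟩) + u (pivot t ⟨1, by omega⟩) := by
  rw [twoPlanesLattice, Submodule.mem_inf, Submodule.mem_comap, Ideal.mem_span_singleton]
  simp only [bcSum, LinearMap.add_apply, LinearMap.proj_apply]

lemma twoPlanes_not_saturated (hm : 2 ≤ m) :
    saturation (twoPlanesLattice hm t) ≠ twoPlanesLattice hm t := by
  rw [saturation_twoPlanes]
  intro heq
  have h : triGen (pivot (m := m) t) (fun _ => 1) (linearW t) ⟨0, by omega⟩ ∈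
    linearLattice m t := triGen_mem _
  rw [heq, mem_twoPlanes] at h
  have := h.2
  simp only [triGen, expDiff, linearW_pivot, Finsupp.single_apply, Fin.ext_iff, pivot_val] at this
  norm_num at this

lemma twoPlanes_not_isCM (hm : 2 ≤ m) :
    ¬ IsCMLatticeQuotient k (twoPlanesLattice hm t) := by
  -- The squares of `b` and `c` are needed: `b - a` and `c - d` are not in the lattice ideal.
  let N : Fin m → ℕ := fun i => if (i : ℕ) < 2 then 2 else 1
  have hgen (i : Fin m) : triGen (pivot (m := m) t) (fun _ => 1) (linearW t) i ∈
    linearLattice m t := triGen_mem _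
  refine not_isCM k (twoPlanes_rank t hm) (pivot_injective t) N (idxA_ne_idxD t)
    (pivot_ne_idxA t) (pivot_ne_idxD t) (fun i => N i • linearW t i) (fun i => ?_)
    (fun i => ?_) (β := Finsupp.single (pivot t ⟨0, by omega⟩) 1)
    (γ := Finsupp.single (pivot t ⟨1, by omega⟩) 1) ?_ ?_
  · simp only [linearW, N]
    split_ifs <;> simp
  · rw [mem_twoPlanes]
    constructor
    · convert Submodule.smul_mem _ (N i : ℤ) (hgen i) using 1
      funext j
      simp [triGen, expDiff, Finsupp.single_apply]
      split_ifs <;> ring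
    · simp only [expDiff, Finsupp.smul_apply, linearW_pivot, smul_zero, Finsupp.single_apply,
        Fin.ext_iff, pivot_val, N]
      split_ifs <;> omega
  · rw [mem_twoPlanes]
    constructor
    · convert Submodule.sub_mem _ (hgen ⟨1, by omega⟩) (hgen ⟨0, by omega⟩) using 1
      funext j
      simp only [Pi.sub_apply, triGen, expDiff, linearW, if_true, zero_ne_one, if_false,
        Finsupp.add_apply, Finsupp.single_apply, Fin.ext_iff, pivot_val, idxA_val, idxD_val]
      split_ifs <;> omega
    · simp only [expDiff, Finsupp.add_apply, Finsupp.single_apply, Fin.ext_iff, pivot_val,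
        idxA_val, idxD_val, if_true, zero_ne_one, one_ne_zero, if_false]
      split_ifs <;> first | contradiction | omega
  · intro u hu
    rw [mem_twoPlanes] at hu
    obtain ⟨hu, hpar⟩ := hu
    have h2 := coordSum_linear t hu
    rw [coordSum_expDiff, Finsupp.degree_single] at h2
    have h3 : u (idxA m t) + (u (pivot t ⟨0, by omega⟩) + u (pivot t ⟨1, by omega⟩)) ≤
        u.degree := by
      have hne : pivot t (⟨0, by omega⟩ : Fin m) ≠ pivot t ⟨1, by omega⟩ :=
        (pivot_injective t).ne (by simp)
      rw [Finsupp.degree_eq_sum, ← Finset.sum_pair hne,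
        ← Finset.sum_insert (by
          simp [(pivot_ne_idxA t _).symm])]
      exact Finset.sum_le_sum_of_subset (Finset.subset_univ _)
    simp only [expDiff, Finsupp.single_apply, Fin.ext_iff, pivot_val, if_true, zero_ne_one,
      if_false] at hpar
    omega

end Families

end LatticeIdeals

/-- Theorem `thm:generalCase`: for every `m ≥ 2` there are
infinitely many rank-`m` positive non-saturated lattices `L` such that (a) `I_L` is a
complete intersection while `k[x]/I_{L^sat}` is not Cohen–Macaulay, and (b) `k[x]/I_L`
is not Cohen–Macaulay while `I_{L^sat}` is a complete intersection. -/
theorem statement15 (k : Type*) [Field k] (m : ℕ) (hm : 2 ≤ m) :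
    {p : (n : ℕ) × Submodule ℤ (Fin n → ℤ) |
        IsPositiveLattice p.2 ∧ latticeRank p.2 = m ∧ saturation p.2 ≠ p.2 ∧
          IsCI (latticeIdeal k p.2) m ∧
            ¬ IsCMLatticeQuotient k (saturation p.2)}.Infinite ∧
    {p : (n : ℕ) × Submodule ℤ (Fin n → ℤ) |
        IsPositiveLattice p.2 ∧ latticeRank p.2 = m ∧ saturation p.2 ≠ p.2 ∧
          ¬ IsCMLatticeQuotient k p.2 ∧
            IsCI (latticeIdeal k (saturation p.2)) m}.Infinite := by
  constructor
  · refine Set.infinite_of_injective_forall_mem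
      (f := fun t => (⟨m + 2 + t, quarticLattice m t⟩ : (n : ℕ) × Submodule ℤ (Fin n → ℤ)))
      (fun s t h => by simpa using congrArg Sigma.fst h) fun t => ⟨?_, ?_, ?_, ?_, ?_⟩
    · exact isPositiveLattice_of_coordSum fun u hu => coordSum_quartic t (le_saturation _ hu)
    · refine triLattice_rank (pivot_injective t) (quarticW_pivot t) fun i => ?_
      unfold quarticN
      split_ifs <;> omega
    · exact quartic_not_saturated t hm
    · exact isCI_triLattice k (pivot_injective t) (quarticW_pivot t)
    · exact quartic_not_isCM k t hm
  · refine Set.infinite_of_injective_forall_mem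
      (f := fun t =>
        (⟨m + 2 + t, twoPlanesLattice hm t⟩ : (n : ℕ) × Submodule ℤ (Fin n → ℤ)))
      (fun s t h => by simpa using congrArg Sigma.fst h) fun t => ⟨?_, ?_, ?_, ?_, ?_⟩
    · exact isPositiveLattice_of_coordSum fun u hu => coordSum_linear t hu.1
    · exact twoPlanes_rank t hm
    · exact twoPlanes_not_saturated t hm
    · exact twoPlanes_not_isCM k t hm
    · simp only [saturation_twoPlanes]
      exact isCI_triLattice k (pivot_injective t) (linearW_pivot t)
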